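/- Let 𝔨 be a real Lie algebra, K₀ ⊆ 𝔨 a Lie subalgebra, and V ⊆ 𝔨 a linear subspace such that ⁅Z, Y⁆ ∈ V + K₀ for every Z ∈ K₀ and every Y ∈ V, and define K_j as in the Killing filtration. Let F : 𝔨 → 𝔨 be a Lie algebra automorphism such that F(K₀) ⊆ K₀ and F(Y) − Y ∈ K₀ for every Y ∈ V. Then: (i) for every Z ∈ V + K₀ one has F(Z) − Z ∈ K₀; and (ii) for every j ≥ 0 and every Z ∈ K_j one has F(Z) − Z ∈ K_{j+1}. In particular F(K_j) ⊆ K_j for every j ≥ 0. -/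

import Mathlib

/-- The Killing filtration: `K 0 = K₀` and
`K (j+1) = {Z ∈ K₀ : ⁅Z, Y⁆ ∈ K j for all Y ∈ V}`. -/
def killingFiltration (𝔨 : Type*) [LieRing 𝔨] [LieAlgebra ℝ 𝔨]
    (K₀ : LieSubalgebra ℝ 𝔨) (V : Submodule ℝ 𝔨) : ℕ → Submodule ℝ 𝔨
  | 0 => K₀.toSubmodule
  | (j + 1) =>
    { carrier := {Z | Z ∈ K₀ ∧ ∀ Y ∈ V, ⁅Z, Y⁆ ∈ killingFiltration 𝔨 K₀ V j}
      add_mem' := by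
        rintro a b ⟨ha, ha'⟩ ⟨hb, hb'⟩
        refine ⟨K₀.add_mem ha hb, fun Y hY => ?_⟩
        rw [add_lie]
        exact (killingFiltration 𝔨 K₀ V j).add_mem (ha' Y hY) (hb' Y hY)
      zero_mem' := by
        refine ⟨K₀.zero_mem, fun Y hY => ?_⟩
        rw [zero_lie]
        exact (killingFiltration 𝔨 K₀ V j).zero_mem
      smul_mem' := by
        rintro c a ⟨ha, ha'⟩
        refine ⟨K₀.smul_mem c ha, fun Y hY => ?_⟩
        rw [smul_lie]
        exact (killingFiltration 𝔨 K₀ V j).smul_mem c (ha' Y hY) }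


theorem killingFiltration_anti {𝔨 : Type*} [LieRing 𝔨] [LieAlgebra ℝ 𝔨]
    (K₀ : LieSubalgebra ℝ 𝔨) (V : Submodule ℝ 𝔨) (j : ℕ) :
    ∀ Z ∈ killingFiltration 𝔨 K₀ V (j + 1), Z ∈ killingFiltration 𝔨 K₀ V j := by
  induction j with
  | zero => exact fun Z hZ => hZ.1
  | succ j ih => exact fun Z hZ => ⟨hZ.1, fun Y hY => ih _ (hZ.2 Y hY)⟩

theorem killingFiltration_lie {𝔨 : Type*} [LieRing 𝔨] [LieAlgebra ℝ 𝔨]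
    (K₀ : LieSubalgebra ℝ 𝔨) (V : Submodule ℝ 𝔨)
    (hbr : ∀ Z ∈ K₀, ∀ Y ∈ V, ⁅Z, Y⁆ ∈ V ⊔ K₀.toSubmodule) (j : ℕ) :
    ∀ U ∈ killingFiltration 𝔨 K₀ V j, ∀ W ∈ K₀, ⁅U, W⁆ ∈ killingFiltration 𝔨 K₀ V j := by
  induction j with
  | zero => exact fun U hU W hW => K₀.lie_mem hU hW
  | succ j ih =>
    intro U hU W hW
    refine ⟨K₀.lie_mem hU.1 hW, fun Y hY => ?_⟩
    obtain ⟨v, hv, k, hk, hvk⟩ := Submodule.mem_sup.1 (hbr W hW Y hY)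
    have e : ⁅⁅U, W⁆, Y⁆ = ⁅U, v⁆ + ⁅U, k⁆ + ⁅⁅U, Y⁆, W⁆ := by
      rw [← lie_add, hvk, lie_lie, ← lie_skew ⁅U, Y⁆ W, sub_eq_add_neg]
    rw [e]
    exact add_mem (add_mem (hU.2 v hv) (ih U (killingFiltration_anti K₀ V j U hU) k hk))
      (ih _ (hU.2 Y hY) W hW)

/-- if `F` is a Lie algebra automorphism with `F(K₀) ⊆ K₀` and
`F(Y) − Y ∈ K₀` for all `Y ∈ V`, then (i) `F(Z) − Z ∈ K₀` for all `Z ∈ V + K₀`,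
(ii) `F(Z) − Z ∈ K_{j+1}` for all `Z ∈ K_j`, and in particular `F(K_j) ⊆ K_j`. -/
theorem auto_preserves_killingFiltration {𝔨 : Type*} [LieRing 𝔨] [LieAlgebra ℝ 𝔨]
    (K₀ : LieSubalgebra ℝ 𝔨) (V : Submodule ℝ 𝔨)
    (hbr : ∀ Z ∈ K₀, ∀ Y ∈ V, ⁅Z, Y⁆ ∈ V ⊔ K₀.toSubmodule)
    (F : 𝔨 ≃ₗ⁅ℝ⁆ 𝔨)
    (hF0 : ∀ Z ∈ K₀, F Z ∈ K₀)
    (hFV : ∀ Y ∈ V, F Y - Y ∈ K₀) :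
    (∀ Z ∈ V ⊔ K₀.toSubmodule, F Z - Z ∈ K₀) ∧
    (∀ j : ℕ, ∀ Z ∈ killingFiltration 𝔨 K₀ V j,
        F Z - Z ∈ killingFiltration 𝔨 K₀ V (j + 1)) ∧
    (∀ j : ℕ, ∀ Z ∈ killingFiltration 𝔨 K₀ V j, F Z ∈ killingFiltration 𝔨 K₀ V j) := by
  have h1 : ∀ Z ∈ V ⊔ K₀.toSubmodule, F Z - Z ∈ K₀ := by
    intro Z hZ
    obtain ⟨v, hv, k, hk, rfl⟩ := Submodule.mem_sup.1 hZ
    have e : F (v + k) - (v + k) = (F v - v) + (F k - k) := by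
      rw [map_add]; abel
    rw [e]
    exact K₀.add_mem (hFV v hv) (K₀.sub_mem (hF0 k hk) hk)
  have key : ∀ Z Y : 𝔨, ⁅F Z - Z, Y⁆ = (F ⁅Z, Y⁆ - ⁅Z, Y⁆) - ⁅F Z, F Y - Y⁆ := by
    intro Z Y
    rw [LieEquiv.map_lie, sub_lie, lie_sub]; abel
  have h2 : ∀ j : ℕ, ∀ Z ∈ killingFiltration 𝔨 K₀ V j,
      F Z - Z ∈ killingFiltration 𝔨 K₀ V (j + 1) := by
    intro j
    induction j with
    | zero =>
      intro Z hZ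
      refine ⟨K₀.sub_mem (hF0 Z hZ) hZ, fun Y hY => ?_⟩
      rw [key]
      exact K₀.sub_mem (h1 _ (hbr Z hZ Y hY)) (K₀.lie_mem (hF0 Z hZ) (hFV Y hY))
    | succ j ih =>
      intro Z hZ
      refine ⟨K₀.sub_mem (hF0 Z hZ.1) hZ.1, fun Y hY => ?_⟩
      rw [key]
      have hFZ : F Z ∈ killingFiltration 𝔨 K₀ V (j + 1) := by
        have := add_mem (ih Z (killingFiltration_anti K₀ V j Z hZ)) hZ
        rwa [sub_add_cancel] at this
      exact sub_mem (ih _ (hZ.2 Y hY))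
        (killingFiltration_lie K₀ V hbr (j + 1) _ hFZ _ (hFV Y hY))
  refine ⟨h1, h2, fun j Z hZ => ?_⟩
  have := add_mem (killingFiltration_anti K₀ V j _ (h2 j Z hZ)) hZ
  rwa [sub_add_cancel] at this
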